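/- arXiv:2508.00099 — 6 statements merged into one kernel-verified Lean document; each statement's English description precedes it below -/
import Mathlib

section
/- Let X be a metric space, let Z ⊆ X be a finite nonempty subset with N elements, and let r₀ > 0 and C ≥ 2 be real numbers. Then there exists a real number r with r₀/C^(N²) ≤ r ≤ r₀ and a subset V ⊆ Z such that: (i) for every z ∈ Z there exists v ∈ V with dist(z, v) ≤ r/C; and (ii) any two distinct elements v, v' ∈ V satisfy dist(v, v') > r. -/
/-!
The half-open intervals `(r₀ / C ^ (k + 1), r₀ / C ^ k]` with `0 ≤ k ≤ N ^ 2` are pairwise disjoint,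
and `Z` has at most `N ^ 2` distances, so some interval `(r / C, r]` contains no distance of `Z`.
A maximal `r`-separated subset `V` of `Z` is an `r`-net of `Z`; since no distance lies in
`(r / C, r]`, it is in fact an `r / C`-net.
-/

open Finset Metric
open scoped NNReal

theorem exists_mem_disjoint_of_card_lt_card {ι α : Type*} {s : Finset ι} {t : Finset α}
    {A : ι → Set α} (hA : (s : Set ι).PairwiseDisjoint A) (hts : #t < #s) :
    ∃ i ∈ s, Disjoint (t : Set α) (A i) := by
  by_contra! hmeet
  have hst : #s ≤ #t := card_le_card_of_forall_subsingleton (fun i x ↦ x ∈ A i)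
    (fun i hi ↦ Set.not_disjoint_iff.mp (hmeet i hi))
    fun x _ i hi j hj ↦ hA.elim_set hi.1 hj.1 x hi.2 hj.2
  exact hts.not_ge hst

theorem exists_le_card_disjoint_Ioc_of_antitone {α : Type*} [Preorder α] {f : ℕ → α}
    (hf : Antitone f) (t : Finset α) :
    ∃ k ≤ #t, Disjoint (t : Set α) (Set.Ioc (f (k + 1)) (f k)) := by
  obtain ⟨k, hk, hdisj⟩ := exists_mem_disjoint_of_card_lt_card (s := range (#t + 1)) (t := t)
    (hf.pairwise_disjoint_on_Ioc_succ.set_pairwise _) (by simp)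
  exact ⟨k, mem_range_succ_iff.mp hk, hdisj⟩

theorem antitone_div_pow {𝕜 : Type*} [Field 𝕜] [LinearOrder 𝕜] [IsStrictOrderedRing 𝕜] {a c : 𝕜}
    (ha : 0 ≤ a) (hc : 1 ≤ c) : Antitone fun k : ℕ ↦ a / c ^ k := fun _ _ hkl ↦
  div_le_div_of_nonneg_left ha (pow_pos (zero_lt_one.trans_le hc) _) (pow_le_pow_right₀ hc hkl)

theorem exists_isSeparated_isCover {X : Type*} [PseudoEMetricSpace X] (ε : ℝ≥0) (s : Set X) :
    ∃ V ⊆ s, IsSeparated ε V ∧ IsCover ε s V := by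
  obtain ⟨V, hV⟩ : ∃ V, Maximal (fun V ↦ V ⊆ s ∧ IsSeparated ε V) V :=
    zorn_subset {V | V ⊆ s ∧ IsSeparated ε V} fun c hc hchain ↦
      ⟨⋃₀ c, ⟨Set.sUnion_subset fun V hV ↦ (hc hV).1,
        (Set.pairwise_sUnion hchain.directedOn).mpr fun V hV ↦ (hc hV).2⟩,
        fun _ ↦ Set.subset_sUnion_of_mem⟩
  exact ⟨V, hV.prop.1, hV.prop.2, .of_maximal_isSeparated hV⟩

section PseudoMetricSpace

variable {X : Type*} [PseudoMetricSpace X]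

theorem exists_pairwise_lt_dist_forall_exists_dist_le {r : ℝ} (hr : 0 ≤ r) (s : Set X) :
    ∃ V ⊆ s, V.Pairwise (r < dist · ·) ∧ ∀ z ∈ s, ∃ v ∈ V, dist z v ≤ r := by
  lift r to ℝ≥0 using hr
  obtain ⟨V, hVs, hsep, hcover⟩ := exists_isSeparated_isCover r s
  refine ⟨V, hVs, fun v hv w hw hvw ↦ ?_, fun z hz ↦ ?_⟩
  · exact not_le.mp fun hle ↦ (hsep hv hw hvw).not_ge (edist_le_coe.mpr (dist_le_coe.mp hle))
  · obtain ⟨v, hv, hzv⟩ := hcover hz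
    exact ⟨v, hv, dist_le_coe.mpr (edist_le_coe.mp hzv)⟩

theorem exists_pairwise_lt_dist_forall_exists_dist_le_of_gap {q r : ℝ} (hr : 0 ≤ r) {s : Set X}
    (hgap : ∀ x ∈ s, ∀ y ∈ s, dist x y ∉ Set.Ioc q r) :
    ∃ V ⊆ s, V.Pairwise (r < dist · ·) ∧ ∀ z ∈ s, ∃ v ∈ V, dist z v ≤ q := by
  obtain ⟨V, hVs, hsep, hnet⟩ := exists_pairwise_lt_dist_forall_exists_dist_le hr s
  refine ⟨V, hVs, hsep, fun z hz ↦ ?_⟩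
  obtain ⟨v, hv, hzv⟩ := hnet z hz
  exact ⟨v, hv, not_lt.mp fun hq ↦ hgap z hz v (hVs hv) ⟨hq, hzv⟩⟩

theorem exists_le_card_sq_forall_dist_notMem_Ioc {f : ℕ → ℝ} (hf : Antitone f) (Z : Finset X) :
    ∃ k ≤ #Z ^ 2, ∀ x ∈ Z, ∀ y ∈ Z, dist x y ∉ Set.Ioc (f (k + 1)) (f k) := by
  obtain ⟨k, hk, hdisj⟩ := exists_le_card_disjoint_Ioc_of_antitone hf (image₂ dist Z Z)
  have hcard : #(image₂ dist Z Z) ≤ #Z ^ 2 := (card_image₂_le dist Z Z).trans_eq (sq _).symm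
  exact ⟨k, hk.trans hcard, fun x hx y hy ↦
    Set.disjoint_left.mp hdisj (mem_coe.mpr (mem_image₂_of_mem hx hy))⟩

theorem archipelago_lemma_general (Z : Finset X) {r₀ C : ℝ} (hr₀ : 0 ≤ r₀) (hC : 1 ≤ C) :
    ∃ r : ℝ, r₀ / C ^ (#Z ^ 2) ≤ r ∧ r ≤ r₀ ∧
      ∃ V : Finset X, V ⊆ Z ∧
        (∀ z ∈ Z, ∃ v ∈ V, dist z v ≤ r / C) ∧
        (∀ v ∈ V, ∀ v' ∈ V, v ≠ v' → r < dist v v') := by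
  have hanti := antitone_div_pow hr₀ hC
  obtain ⟨k, hk, hgap⟩ := exists_le_card_sq_forall_dist_notMem_Ioc hanti Z
  simp only [pow_succ, ← div_div] at hgap
  obtain ⟨V, hVZ, hsep, hnet⟩ := exists_pairwise_lt_dist_forall_exists_dist_le_of_gap
    (s := (Z : Set X)) (by positivity) hgap
  lift V to Finset X using Z.finite_toSet.subset hVZ
  exact ⟨r₀ / C ^ k, hanti hk, div_le_self hr₀ (one_le_pow₀ hC), V, coe_subset.mp hVZ, hnet,
    fun v hv v' hv' hne ↦ hsep hv hv' hne⟩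

end PseudoMetricSpace

/-- The Archipelago lemma: in a metric space, given a finite nonempty set `Z` with `N`
elements, `r₀ > 0` and `C ≥ 2`, there exist a radius `r ∈ [r₀/C^(N²), r₀]` and a subset
`V ⊆ Z` such that every point of `Z` is within distance `r/C` of some point of `V`, while
distinct points of `V` are at distance greater than `r` from each other. -/
theorem archipelago_lemma {X : Type*} [MetricSpace X] (Z : Finset X) (hZ : Z.Nonempty)
    (N : ℕ) (hN : Z.card = N) (r₀ C : ℝ) (hr₀ : 0 < r₀) (hC : 2 ≤ C) :
    ∃ r : ℝ, r₀ / C ^ (N ^ 2) ≤ r ∧ r ≤ r₀ ∧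
      ∃ V : Finset X, V ⊆ Z ∧
        (∀ z ∈ Z, ∃ v ∈ V, dist z v ≤ r / C) ∧
        (∀ v ∈ V, ∀ v' ∈ V, v ≠ v' → r < dist v v') := by
  subst hN
  exact archipelago_lemma_general Z hr₀.le (one_le_two.trans hC)
end

section
/- Let g ≥ 1 and regard ℂ^{2g} as a real vector space. Let W be an ℝ-linear subspace of ℂ^{2g} such that A·W ⊆ W for every A in the real symplectic group Sp(2g,ℝ) (real 2g×2g matrices preserving the standard symplectic form, acting on ℂ^{2g} via the inclusion of real matrices into complex matrices, i.e. simultaneously on real and imaginary parts). Then either W = ℂ^{2g}, or there exists c ∈ ℂ with W = c·ℝ^{2g} = {c·v : v ∈ ℝ^{2g}} (the case c = 0 giving W = {0}). -/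
/-- `ℝ^{2g}` modeled as `ℝ^g × ℝ^g`. -/
abbrev RVec (g : ℕ) := (Fin g → ℝ) × (Fin g → ℝ)

/-- The standard symplectic form `ω((a,b),(a',b')) = ∑ (aᵢ·b'ᵢ − bᵢ·a'ᵢ)` on `ℝ^{2g}`. -/
def sympForm (g : ℕ) (v w : RVec g) : ℝ :=
  ∑ i, (v.1 i * w.2 i - v.2 i * w.1 i)

/-- `ℂ^{2g}` modeled as `ℂ^g × ℂ^g`. -/
abbrev CVec (g : ℕ) := (Fin g → ℂ) × (Fin g → ℂ)

/-- Coordinatewise real part of a vector in `ℂ^{2g}`. -/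
def reV {g : ℕ} (p : CVec g) : RVec g :=
  (fun i => (p.1 i).re, fun i => (p.2 i).re)

/-- Coordinatewise imaginary part of a vector in `ℂ^{2g}`. -/
def imV {g : ℕ} (p : CVec g) : RVec g :=
  (fun i => (p.1 i).im, fun i => (p.2 i).im)

/-- The inclusion `ℝ^{2g} → ℂ^{2g}`. -/
def rToC {g : ℕ} (v : RVec g) : CVec g :=
  (fun i => (v.1 i : ℂ), fun i => (v.2 i : ℂ))

/-- The action of a real linear map `A` on `ℂ^{2g}`, acting simultaneously on real and
imaginary parts: `A·p = A(Re p) + i·A(Im p)`. -/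
def actC {g : ℕ} (A : RVec g →ₗ[ℝ] RVec g) (p : CVec g) : CVec g :=
  (fun i => ((A (reV p)).1 i : ℂ) + ((A (imV p)).1 i : ℝ) * Complex.I,
   fun i => ((A (reV p)).2 i : ℂ) + ((A (imV p)).2 i : ℝ) * Complex.I)

/-!
`ℂ^{2g}` is `ℂ ⊗ V` with `V = ℝ^{2g}`. For `u ∈ V`, the transvection `v ↦ v + ω(v, u) u` is
symplectic, and on `ℂ ⊗ V` it sends `p` to `p + ω(p, u) ⊗ u`, where `ω(p, u) ∈ ℂ` is the contraction
of `p` against `u`. So an invariant `W` contains `ω(p, u) ⊗ u` for all `p ∈ W`. Applied to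
`p = c ⊗ v`, this shows that `c ⊗ v ∈ W` with `v ≠ 0` forces `c ⊗ V ⊆ W`. Hence all contractions of
elements of `W` lie in `S = {c | c ⊗ V ⊆ W}`, and nondegeneracy of `ω` gives `W = S ⊗ V`. As a
subspace of the real plane `ℂ`, `S` is either `ℂ` or spanned by one element.
-/

open Module TensorProduct

section Contraction

variable {R L V : Type*} [CommRing R] [AddCommGroup L] [Module R L] [AddCommGroup V] [Module R V]

/-- The contraction `l ⊗ v ↦ ω v u • l` against `u`, which extends the linear form `ω · u` from `V`
to vectors of `L ⊗ V` with coefficients in `L`. -/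
noncomputable def contract (ω : LinearMap.BilinForm R V) (u : V) : L ⊗[R] V →ₗ[R] L :=
  (TensorProduct.rid R L).toLinearMap ∘ₗ (ω.flip u).lTensor L

@[simp]
theorem contract_tmul (ω : LinearMap.BilinForm R V) (u : V) (l : L) (v : V) :
    contract ω u (l ⊗ₜ[R] v) = ω v u • l := by
  simp [contract]

theorem contract_rTensor {M : Type*} [AddCommGroup M] [Module R M] (ω : LinearMap.BilinForm R V)
    (u : V) (f : L →ₗ[R] M) (p : L ⊗[R] V) :
    contract ω u (f.rTensor V p) = f (contract ω u p) := by
  induction p with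
  | zero => simp
  | tmul l v => simp
  | add p q hp hq => simp only [map_add, hp, hq]

theorem contract_eq_apply_lid (ω : LinearMap.BilinForm R V) (u : V) (p : R ⊗[R] V) :
    contract ω u p = ω (TensorProduct.lid R V p) u := by
  induction p with
  | zero => simp
  | tmul r v => simp [mul_comm]
  | add p q hp hq => simp only [map_add, LinearMap.add_apply, hp, hq]

theorem eq_zero_of_forall_contract_eq_zero [Module.Free R L] {ω : LinearMap.BilinForm R V}
    (hω : ω.SeparatingLeft) {p : L ⊗[R] V} (hp : ∀ u, contract ω u p = 0) : p = 0 := by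
  apply (TensorProduct.equivFinsuppOfBasisLeft (Module.Free.chooseBasis R L)).injective
  ext i
  rw [TensorProduct.equivFinsuppOfBasisLeft_apply, map_zero, Finsupp.zero_apply]
  refine hω _ fun u ↦ ?_
  rw [← contract_eq_apply_lid, contract_rTensor, hp, map_zero]

theorem range_rTensor_subtype_le_map₂_mk (S : Submodule R L) :
    LinearMap.range (S.subtype.rTensor V) ≤ Submodule.map₂ (TensorProduct.mk R L V) S ⊤ := by
  rw [LinearMap.rTensor, TensorProduct.range_map_eq_span_tmul, Submodule.span_le]
  rintro _ ⟨s, v, rfl⟩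
  exact Submodule.apply_mem_map₂ _ s.2 Submodule.mem_top

theorem mem_map₂_mk_of_forall_contract_mem {ω : LinearMap.BilinForm R V} (hω : ω.SeparatingLeft)
    {S : Submodule R L} [Module.Free R (L ⧸ S)] {p : L ⊗[R] V} (hp : ∀ u, contract ω u p ∈ S) :
    p ∈ Submodule.map₂ (TensorProduct.mk R L V) S ⊤ := by
  have hquot : S.mkQ.rTensor V p = 0 :=
    eq_zero_of_forall_contract_eq_zero hω fun u ↦ by simpa [contract_rTensor] using hp u
  apply range_rTensor_subtype_le_map₂_mk S
  rwa [← rTensor_mkQ, LinearMap.mem_ker]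

end Contraction

section Transvection

variable {R L V : Type*} [CommRing R] [AddCommGroup L] [Module R L] [AddCommGroup V] [Module R V]

theorem apply_transvection_transvection_of_isAlt {ω : LinearMap.BilinForm R V} (hω : ω.IsAlt)
    (u v w : V) :
    ω (LinearMap.transvection (ω.flip u) u v) (LinearMap.transvection (ω.flip u) u w) = ω v w := by
  simp only [LinearMap.transvection.apply, LinearMap.BilinForm.flip_apply, map_add, map_smul,
    LinearMap.add_apply, LinearMap.smul_apply, smul_eq_mul, hω.self_eq_zero u, ← hω.neg_eq w u]
  ring

theorem lTensor_transvection_apply (ω : LinearMap.BilinForm R V) (u : V) (p : L ⊗[R] V) :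
    (LinearMap.transvection (ω.flip u) u).lTensor L p = p + contract ω u p ⊗ₜ[R] u := by
  induction p with
  | zero => simp
  | tmul l v => simp [LinearMap.transvection.apply, tmul_add, smul_tmul]
  | add p q hp hq => rw [map_add, hp, hq, map_add, add_tmul, add_add_add_comm]

/-- Invariance of `W ≤ L ⊗ V` under the maps `v ↦ v + ω v u • u` acting on the second factor. When
`ω` is alternating, these are the symplectic transvections. -/
def IsTransvectionInvariant (ω : LinearMap.BilinForm R V) (W : Submodule R (L ⊗[R] V)) : Prop :=
  ∀ u, ∀ p ∈ W, (LinearMap.transvection (ω.flip u) u).lTensor L p ∈ W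

theorem isTransvectionInvariant_of_forall_isometry {ω : LinearMap.BilinForm R V} (hω : ω.IsAlt)
    {W : Submodule R (L ⊗[R] V)}
    (hW : ∀ A : V ≃ₗ[R] V, (∀ v w, ω (A v) (A w) = ω v w) →
      ∀ p ∈ W, A.toLinearMap.lTensor L p ∈ W) :
    IsTransvectionInvariant ω W := fun u ↦
  hW (LinearEquiv.transvection (f := ω.flip u) (hω.self_eq_zero u))
    (apply_transvection_transvection_of_isAlt hω u)

/-- The coefficient space of `W ≤ L ⊗ V`: the largest `S ≤ L` with `S ⊗ V ≤ W`. -/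
def coeffs (W : Submodule R (L ⊗[R] V)) : Submodule R L :=
  ⨅ v, W.comap ((TensorProduct.mk R L V).flip v)

theorem mem_coeffs {W : Submodule R (L ⊗[R] V)} {l : L} :
    l ∈ coeffs W ↔ ∀ v, l ⊗ₜ[R] v ∈ W := by
  simp [coeffs]

theorem map₂_mk_coeffs_le (W : Submodule R (L ⊗[R] V)) :
    Submodule.map₂ (TensorProduct.mk R L V) (coeffs W) ⊤ ≤ W :=
  Submodule.map₂_le.mpr fun _ hl v _ ↦ mem_coeffs.mp hl v

theorem IsTransvectionInvariant.contract_tmul_mem {ω : LinearMap.BilinForm R V}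
    {W : Submodule R (L ⊗[R] V)} (hW : IsTransvectionInvariant ω W) {p : L ⊗[R] V} (hp : p ∈ W)
    (u : V) : contract ω u p ⊗ₜ[R] u ∈ W := by
  have htransvection := hW u p hp
  rwa [lTensor_transvection_apply, W.add_mem_iff_right hp] at htransvection

end Transvection

section Field

variable {K L V : Type*} [Field K] [AddCommGroup L] [Module K L] [AddCommGroup V] [Module K V]

namespace IsTransvectionInvariant

variable {ω : LinearMap.BilinForm K V} {W : Submodule K (L ⊗[K] V)}

theorem tmul_mem_of_apply_ne_zero (hW : IsTransvectionInvariant ω W) {l : L} {u w : V}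
    (hu : l ⊗ₜ[K] u ∈ W) (huw : ω u w ≠ 0) : l ⊗ₜ[K] w ∈ W := by
  have hscaled := hW.contract_tmul_mem hu w
  rwa [contract_tmul, ← smul_tmul', W.smul_mem_iff huw] at hscaled

theorem mem_coeffs_of_tmul_mem (hW : IsTransvectionInvariant ω W) (hω : ω.SeparatingLeft) {l : L}
    {u : V} (hu₀ : u ≠ 0) (hu : l ⊗ₜ[K] u ∈ W) : l ∈ coeffs W := by
  refine mem_coeffs.mpr fun w ↦ ?_
  by_cases huw : ω u w = 0
  · -- Here `w = (w + x) - x` is a difference of two vectors that are not orthogonal to `u`.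
    obtain ⟨x, hux⟩ : ∃ x, ω u x ≠ 0 := by
      by_contra! hzero
      exact hu₀ (hω u hzero)
    have hx : l ⊗ₜ[K] x ∈ W := hW.tmul_mem_of_apply_ne_zero hu hux
    have hwx : l ⊗ₜ[K] (w + x) ∈ W :=
      hW.tmul_mem_of_apply_ne_zero hu (by rwa [map_add, huw, zero_add])
    rwa [tmul_add, W.add_mem_iff_left hx] at hwx
  · exact hW.tmul_mem_of_apply_ne_zero hu huw

theorem contract_mem_coeffs (hW : IsTransvectionInvariant ω W) (hω : ω.SeparatingLeft)
    {p : L ⊗[K] V} (hp : p ∈ W) (u : V) : contract ω u p ∈ coeffs W := by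
  obtain rfl | hu := eq_or_ne u 0
  · simp [contract]
  · exact hW.mem_coeffs_of_tmul_mem hω hu (hW.contract_tmul_mem hp u)

theorem eq_map₂_mk_coeffs (hW : IsTransvectionInvariant ω W) (hω : ω.SeparatingLeft) :
    W = Submodule.map₂ (TensorProduct.mk K L V) (coeffs W) ⊤ :=
  le_antisymm (fun _ hp ↦ mem_map₂_mk_of_forall_contract_mem hω (hW.contract_mem_coeffs hω hp))
    (map₂_mk_coeffs_le W)

end IsTransvectionInvariant

theorem eq_top_or_exists_eq_span_singleton_of_finrank_le_two [FiniteDimensional K L]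
    (hL : finrank K L ≤ 2) (S : Submodule K L) : S = ⊤ ∨ ∃ c, S = Submodule.span K {c} := by
  refine or_iff_not_imp_left.mpr fun hS ↦ ?_
  have hS_finrank : finrank K S ≤ 1 := by
    have := Submodule.finrank_lt hS
    lia
  exact (S.finrank_le_one_iff_isPrincipal.mp hS_finrank).principal

theorem invariant_subspaces_of_complexified_general [FiniteDimensional K L] (hL : finrank K L ≤ 2)
    {ω : LinearMap.BilinForm K V} (hω_alt : ω.IsAlt) (hω : ω.SeparatingLeft)
    (W : Submodule K (L ⊗[K] V))
    (hW : ∀ A : V ≃ₗ[K] V, (∀ v w, ω (A v) (A w) = ω v w) →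
      ∀ p ∈ W, A.toLinearMap.lTensor L p ∈ W) :
    W = ⊤ ∨ ∃ c : L, W = LinearMap.range (TensorProduct.mk K L V c) := by
  have hW_eq := (isTransvectionInvariant_of_forall_isometry hω_alt hW).eq_map₂_mk_coeffs hω
  obtain hS | ⟨c, hS⟩ := eq_top_or_exists_eq_span_singleton_of_finrank_le_two hL (coeffs W)
  · exact .inl (by rw [hW_eq, hS, TensorProduct.map₂_mk_top_top_eq_top])
  · exact .inr ⟨c, by rw [hW_eq, hS, Submodule.map₂_span_singleton_eq_map, Submodule.map_top]⟩

end Field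

section StandardModel

variable {g : ℕ}

theorem sympForm_eq_dotProduct_sub_dotProduct (v w : RVec g) :
    sympForm g v w = v.1 ⬝ᵥ w.2 - v.2 ⬝ᵥ w.1 :=
  Finset.sum_sub_distrib ..

/-- `sympForm` as a bilinear form. -/
def sympBilin (g : ℕ) : LinearMap.BilinForm ℝ (RVec g) :=
  LinearMap.mk₂ ℝ (sympForm g)
    (fun u v w ↦ by simp [sympForm_eq_dotProduct_sub_dotProduct, add_sub_add_comm])
    (fun r v w ↦ by simp [sympForm_eq_dotProduct_sub_dotProduct, mul_sub])
    (fun u v w ↦ by simp [sympForm_eq_dotProduct_sub_dotProduct, add_sub_add_comm])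
    (fun r v w ↦ by simp [sympForm_eq_dotProduct_sub_dotProduct, mul_sub])

@[simp]
theorem sympBilin_apply (v w : RVec g) : sympBilin g v w = sympForm g v w := rfl

theorem sympBilin_isAlt (g : ℕ) : (sympBilin g).IsAlt := fun v ↦ by
  simp [sympForm, mul_comm]

theorem sympBilin_separatingLeft (g : ℕ) : (sympBilin g).SeparatingLeft := fun v hv ↦ by
  ext i
  · simpa [sympForm, Pi.single_apply] using hv (0, Pi.single i 1)
  · simpa [sympForm, Pi.single_apply] using hv (Pi.single i 1, 0)

/-- `rToC` as a real linear map. -/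
def rToCLinearMap (g : ℕ) : RVec g →ₗ[ℝ] CVec g where
  toFun := rToC
  map_add' v w := by ext i <;> simp [rToC]
  map_smul' r v := by ext i <;> simp [rToC]

/-- The comparison map `c ⊗ v ↦ c • v` from the complexification of `ℝ^{2g}` to `ℂ^{2g}`. -/
noncomputable def complexify (g : ℕ) : ℂ ⊗[ℝ] RVec g →ₗ[ℝ] CVec g :=
  ((rToCLinearMap g).liftBaseChange ℂ).restrictScalars ℝ

@[simp]
theorem complexify_tmul (c : ℂ) (v : RVec g) : complexify g (c ⊗ₜ[ℝ] v) = c • rToC v :=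
  LinearMap.liftBaseChange_tmul ..

theorem complexify_surjective (g : ℕ) : Function.Surjective (complexify g) := fun p ↦ by
  refine ⟨1 ⊗ₜ reV p + Complex.I ⊗ₜ imV p, ?_⟩
  ext i <;> simp [rToC, reV, imV, mul_comm Complex.I]

theorem reV_smul_rToC (c : ℂ) (v : RVec g) : reV (c • rToC v) = c.re • v := by
  ext i <;> simp [reV, rToC]

theorem imV_smul_rToC (c : ℂ) (v : RVec g) : imV (c • rToC v) = c.im • v := by
  ext i <;> simp [imV, rToC]

theorem actC_add (A : RVec g →ₗ[ℝ] RVec g) (p q : CVec g) :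
    actC A (p + q) = actC A p + actC A q := by
  have hre : reV (p + q) = reV p + reV q := rfl
  have him : imV (p + q) = imV p + imV q := rfl
  ext i <;> simp [actC, hre, him] <;> ring

theorem actC_smul_rToC (A : RVec g →ₗ[ℝ] RVec g) (c : ℂ) (v : RVec g) :
    actC A (c • rToC v) = c • rToC (A v) := by
  rw [actC, reV_smul_rToC, imV_smul_rToC, map_smul, map_smul]
  ext i <;> apply Complex.ext <;> simp [rToC]

theorem complexify_lTensor (A : RVec g →ₗ[ℝ] RVec g) (t : ℂ ⊗[ℝ] RVec g) :
    complexify g (A.lTensor ℂ t) = actC A (complexify g t) := by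
  induction t with
  | zero => simpa using (actC_smul_rToC A 0 0).symm
  | tmul c v => simp [actC_smul_rToC]
  | add s t hs ht => simp only [map_add, actC_add, hs, ht]

end StandardModel

/-- Classification of the `Sp(2g,ℝ)`-invariant real subspaces of `ℂ^{2g}`: any `ℝ`-linear
subspace `W ⊆ ℂ^{2g}` invariant under every real symplectic automorphism (acting on real and
imaginary parts simultaneously) is either all of `ℂ^{2g}`, or of the form `c·ℝ^{2g}`
for some `c ∈ ℂ` (with `c = 0` giving `{0}`). -/
theorem invariant_subspaces_of_complexified (g : ℕ) (hg : 1 ≤ g)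
    (W : Submodule ℝ (CVec g))
    (hW : ∀ A : RVec g →ₗ[ℝ] RVec g, Function.Bijective A →
      (∀ v w : RVec g, sympForm g (A v) (A w) = sympForm g v w) →
      ∀ p ∈ W, actC A p ∈ W) :
    W = ⊤ ∨ ∃ c : ℂ, (W : Set (CVec g)) = {q | ∃ v : RVec g, q = c • rToC v} := by
  have hcases := invariant_subspaces_of_complexified_general Complex.finrank_real_complex.le
    (sympBilin_isAlt g) (sympBilin_separatingLeft g) (W.comap (complexify g)) fun A hA t ht ↦ by
      simpa only [Submodule.mem_comap, complexify_lTensor] using hW A A.bijective hA _ ht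
  rw [← Submodule.map_comap_eq_of_surjective (complexify_surjective g) W]
  obtain htop | ⟨c, hc⟩ := hcases
  · left
    rw [htop, Submodule.map_top, LinearMap.range_eq_top.mpr (complexify_surjective g)]
  · refine .inr ⟨c, ?_⟩
    ext q
    simp [hc, eq_comm]
end

section
/- Let g ≥ 1 and let P ∈ ℂ^{2g}, viewed as a homomorphism ℤ^{2g} → ℂ via the standard symplectic pairing or simply as a vector acted on by matrices. The following are equivalent: (i) there exists a finite-index subgroup Γ of the integral symplectic group Sp(2g,ℤ) such that P − L·P ∈ (ℤ + iℤ)^{2g} for every L ∈ Γ; (ii) every coordinate of P lies in ℚ + iℚ. -/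
/-!
Let `Λ` be the group of Gaussian integers and `x` the class of `P` in `(ℂ ⧸ Λ) ^ (2g)`. The
condition `P - L • P ∈ Λ ^ (2g)` says that `L` fixes `x`, so the claim is that `x` has a stabilizer
of finite index in `Sp(2g, ℤ)` exactly when its coordinates are torsion. If they are torsion, they
have only finitely many integral combinations, and the orbit of `x` is finite. Conversely, if
`E * E = 0` and `1 + E` is symplectic, some power `(1 + E) ^ k = 1 + k • E` with `k > 0` fixes `x`,
so `k • E • x = 0`; the two block shears yield all the coordinates of `x`.
-/

open Matrix
open scoped Matrix.Module

theorem finite_range_sum_zsmul_of_isOfFinAddOrder {m n M : Type*} [Finite m] [Fintype n]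
    [AddCommGroup M] {x : n → M} (hx : ∀ j, IsOfFinAddOrder (x j)) :
    (Set.range fun (A : Matrix m n ℤ) i ↦ ∑ j, A i j • x j).Finite := by
  have finite_terms : {y : m → n → M | ∀ i j, y i j ∈ AddSubgroup.zmultiples (x j)}.Finite :=
    Set.Finite.pi' fun _ ↦ Set.Finite.pi' fun j ↦ finite_zmultiples.2 (hx j)
  refine (finite_terms.image fun y i ↦ ∑ j, y i j).subset ?_
  rintro _ ⟨A, rfl⟩
  exact ⟨fun i j ↦ A i j • x j, fun i j ↦ AddSubgroup.zsmul_mem_zmultiples _ _, rfl⟩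

theorem map_intCast_mulVec_eq_smul {n R : Type*} [Fintype n] [DecidableEq n] [Ring R]
    (A : Matrix n n ℤ) (v : n → R) : A.map (fun k ↦ (k : R)) *ᵥ v = A • v := by
  ext i
  simp [mulVec, dotProduct]

theorem one_add_pow_of_mul_self_eq_zero {R : Type*} [Semiring R] {e : R} (he : e * e = 0) (k : ℕ) :
    (1 + e) ^ k = 1 + k • e := by
  induction k with
  | zero => simp
  | succ k ih => simp [pow_succ, ih, mul_add, add_mul, mul_assoc, he, add_assoc]

section SymplecticAction

variable {l M : Type*} [Fintype l] [DecidableEq l] [AddCommGroup M] {x : l ⊕ l → M}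

theorem finiteIndex_stabilizer_of_isOfFinAddOrder (hx : ∀ i, IsOfFinAddOrder (x i)) :
    (MulAction.stabilizer (symplecticGroup l ℤ) x).FiniteIndex := by
  have finite_orbit : (MulAction.orbit (symplecticGroup l ℤ) x).Finite :=
    (finite_range_sum_zsmul_of_isOfFinAddOrder hx).subset <| Set.range_subset_iff.2 fun L ↦ ⟨L, rfl⟩
  rw [Subgroup.finiteIndex_iff, MulAction.index_stabilizer]
  exact (Set.ncard_pos finite_orbit).2 (MulAction.nonempty_orbit x) |>.ne'

theorem isOfFinAddOrder_smul_of_finiteIndex_stabilizer {E : Matrix (l ⊕ l) (l ⊕ l) ℤ}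
    (hE : E * E = 0) (hE_mem : 1 + E ∈ symplecticGroup l ℤ)
    (hx : (MulAction.stabilizer (symplecticGroup l ℤ) x).FiniteIndex) (i : l ⊕ l) :
    IsOfFinAddOrder ((E • x) i) := by
  obtain ⟨k, hk, -, hpow⟩ := Subgroup.exists_pow_mem_of_index_ne_zero hx.index_ne_zero
    (⟨1 + E, hE_mem⟩ : symplecticGroup l ℤ)
  have fixed : (1 + E) ^ k • x = x := hpow
  rw [one_add_pow_of_mul_self_eq_zero hE, add_smul, one_smul, add_eq_left, smul_assoc] at fixed
  exact isOfFinAddOrder_iff_nsmul_eq_zero.2 ⟨k, hk, congrFun fixed i⟩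

theorem isOfFinAddOrder_of_finiteIndex_stabilizer
    (hx : (MulAction.stabilizer (symplecticGroup l ℤ) x).FiniteIndex) (i : l ⊕ l) :
    IsOfFinAddOrder (x i) := by
  have upper_shear := isOfFinAddOrder_smul_of_finiteIndex_stabilizer (E := fromBlocks 0 1 0 0)
    (by simp [fromBlocks_multiply])
    (by simp [← fromBlocks_one, fromBlocks_add, SymplecticGroup.fromBlocks_mem_iff]) hx
  have lower_shear := isOfFinAddOrder_smul_of_finiteIndex_stabilizer (E := fromBlocks 0 0 1 0)
    (by simp [fromBlocks_multiply])
    (by simp [← fromBlocks_one, fromBlocks_add, SymplecticGroup.fromBlocks_mem_iff]) hx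
  cases i with
  | inl i => simpa [one_apply] using lower_shear (Sum.inr i)
  | inr i => simpa [one_apply] using upper_shear (Sum.inl i)

theorem finiteIndex_stabilizer_iff_isOfFinAddOrder :
    (MulAction.stabilizer (symplecticGroup l ℤ) x).FiniteIndex ↔ ∀ i, IsOfFinAddOrder (x i) :=
  ⟨isOfFinAddOrder_of_finiteIndex_stabilizer, finiteIndex_stabilizer_of_isOfFinAddOrder⟩

theorem mem_stabilizer_mk_iff {A : Type*} [AddCommGroup A] (Λ : AddSubgroup A) (P : l ⊕ l → A)
    (L : symplecticGroup l ℤ) :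
    L ∈ MulAction.stabilizer (symplecticGroup l ℤ) (fun i ↦ (P i : A ⧸ Λ)) ↔
      ∀ i, P i - (L • P) i ∈ Λ := by
  have smul_mk (i) : (L • fun i ↦ (P i : A ⧸ Λ)) i = ((L • P) i : A ⧸ Λ) := by
    simp [Submonoid.smul_def]
  simp_rw [MulAction.mem_stabilizer_iff, funext_iff, smul_mk, QuotientAddGroup.eq,
    neg_add_eq_sub]

theorem finite_index_integrality_iff_rational_general {A : Type*} [AddCommGroup A]
    (Λ : AddSubgroup A) (P : l ⊕ l → A) :
    (∃ Γ : Subgroup (symplecticGroup l ℤ), Γ.FiniteIndex ∧ ∀ L ∈ Γ, ∀ i, P i - (L • P) i ∈ Λ) ↔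
      ∀ i, IsOfFinAddOrder (P i : A ⧸ Λ) := by
  simp_rw [← mem_stabilizer_mk_iff, ← finiteIndex_stabilizer_iff_isOfFinAddOrder]
  exact ⟨fun ⟨_, hΓ, hle⟩ ↦ Subgroup.finiteIndex_of_le hle, fun h ↦ ⟨_, h, fun _ hL ↦ hL⟩⟩

end SymplecticAction

/-- The lattice `ℤ + iℤ` of Gaussian integers, as an additive subgroup of `ℂ`. -/
def gaussianLattice : AddSubgroup ℂ := GaussianInt.toComplex.toAddMonoidHom.range

theorem mem_gaussianLattice_iff {z : ℂ} :
    z ∈ gaussianLattice ↔ ∃ m n : ℤ, z = m + n * Complex.I := by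
  constructor
  · rintro ⟨w, rfl⟩
    exact ⟨w.re, w.im, GaussianInt.toComplex_def w⟩
  · rintro ⟨m, n, rfl⟩
    exact ⟨⟨m, n⟩, GaussianInt.toComplex_def' m n⟩

theorem isOfFinAddOrder_mk_gaussianLattice_iff {z : ℂ} :
    IsOfFinAddOrder (z : ℂ ⧸ gaussianLattice) ↔ ∃ q r : ℚ, z = q + r * Complex.I := by
  simp_rw [isOfFinAddOrder_iff_nsmul_eq_zero, ← QuotientAddGroup.mk_nsmul,
    QuotientAddGroup.eq_zero_iff, mem_gaussianLattice_iff, nsmul_eq_mul]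
  constructor
  · rintro ⟨k, hk, m, n, hkz⟩
    have hk' : (k : ℂ) ≠ 0 := Nat.cast_ne_zero.2 hk.ne'
    refine ⟨m / k, n / k, ?_⟩
    push_cast
    field_simp
    linear_combination hkz
  · rintro ⟨q, r, rfl⟩
    refine ⟨q.den * r.den, by positivity, q.num * r.den, r.num * q.den, ?_⟩
    have hq : (q.den : ℂ) * q = q.num := mod_cast q.den_mul_eq_num
    have hr : (r.den : ℂ) * r = r.num := mod_cast r.den_mul_eq_num
    push_cast
    linear_combination (r.den : ℂ) * hq + q.den * Complex.I * hr

/-- For `P ∈ ℂ^{2g}`, there is a finite-index subgroup `Γ` of the integral symplectic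
group `Sp(2g,ℤ)` such that `P − L·P` has Gaussian-integer coordinates for every `L ∈ Γ`
if and only if every coordinate of `P` lies in `ℚ + iℚ`. -/
theorem finite_index_integrality_iff_rational (g : ℕ) (hg : 1 ≤ g)
    (P : (Fin g ⊕ Fin g) → ℂ) :
    (∃ Γ : Subgroup (Matrix.symplecticGroup (Fin g) ℤ), Γ.FiniteIndex ∧
        ∀ L ∈ Γ, ∀ i : Fin g ⊕ Fin g, ∃ m n : ℤ,
          P i - ((L : Matrix (Fin g ⊕ Fin g) (Fin g ⊕ Fin g) ℤ).map
              (fun k => (k : ℂ))).mulVec P i = (m : ℂ) + (n : ℂ) * Complex.I)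
    ↔ (∀ i : Fin g ⊕ Fin g, ∃ q r : ℚ, P i = (q : ℂ) + (r : ℂ) * Complex.I) := by
  simpa only [← mem_gaussianLattice_iff, ← isOfFinAddOrder_mk_gaussianLattice_iff,
    map_intCast_mulVec_eq_smul, Submonoid.smul_def]
    using finite_index_integrality_iff_rational_general gaussianLattice P
end

section
/- Let n ≥ 1, let z : Fin n → ℂ be injective and let α : Fin n → ℂ. Suppose g : ℂ → ℂ is complex-differentiable at every point of ℂ ∖ range(z), that g tends to 0 along the cocompact filter of ℂ (i.e. g(w) → 0 as |w| → ∞), and that for every j the function w ↦ (w − z j)·g(w) tends to α j as w → z j within ℂ ∖ {z j} (so g has at worst a simple pole at z j with residue α j). Then g(w) = Σ_j α j/(w − z j) for every w ∈ ℂ ∖ range(z). -/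
open Filter

open Asymptotics Bornology Function Set
open scoped Topology

/-!
Subtracting the partial fractions from `g` leaves a function `h` with `(w - c) • h w → 0` at each
pole `c`, so every singularity of `h` is removable. The extension of `h` is entire and has the same
limit at infinity as `g`, so by Liouville's theorem it is constant.
-/

section PartialFractions

variable {𝕜 E ι : Type*} [Fintype ι] {z : ι → 𝕜}

theorem tendsto_sum_inv_sub_smul_cobounded [NormedField 𝕜] [SeminormedAddCommGroup E]
    [NormedSpace 𝕜 E] (z : ι → 𝕜) (α : ι → E) :
    Tendsto (fun w => ∑ j, (w - z j)⁻¹ • α j) (cobounded 𝕜) (𝓝 0) := by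
  have term_tendsto (j : ι) : Tendsto (fun w => (w - z j)⁻¹ • α j) (cobounded 𝕜) (𝓝 0) := by
    simpa only [comp_def, zero_smul] using
      (tendsto_inv₀_cobounded.comp (tendsto_sub_const_cobounded (z j))).smul_const (α j)
  simpa only [Finset.sum_const_zero] using tendsto_finsetSum Finset.univ fun j _ => term_tendsto j

theorem tendsto_sub_smul_sum_inv_sub_smul [NormedField 𝕜] [SeminormedAddCommGroup E]
    [NormedSpace 𝕜 E] (hz : Injective z) (α : ι → E) (j : ι) :
    Tendsto (fun w => (w - z j) • ∑ i, (w - z i)⁻¹ • α i) (𝓝[≠] z j) (𝓝 (α j)) := by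
  classical
  have term_tendsto (i : ι) : Tendsto (fun w => (w - z j) • (w - z i)⁻¹ • α i) (𝓝[≠] z j)
      (𝓝 (if i = j then α i else 0)) := by
    rcases eq_or_ne i j with rfl | hij
    · rw [if_pos rfl]
      refine tendsto_const_nhds.congr' ?_
      filter_upwards [self_mem_nhdsWithin] with w hw
      exact (smul_inv_smul₀ (sub_ne_zero.2 hw) _).symm
    · have hne : z j - z i ≠ 0 := sub_ne_zero.2 (hz.ne hij.symm)
      have hcont : ContinuousAt (fun w => (w - z j) • (w - z i)⁻¹ • α i) (z j) := by
        fun_prop (disch := exact hne)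
      simpa only [if_neg hij, sub_self, zero_smul] using hcont.tendsto.mono_left nhdsWithin_le_nhds
  simpa only [Finset.smul_sum, Finset.sum_ite_eq', Finset.mem_univ, if_true] using
    tendsto_finsetSum Finset.univ fun i _ => term_tendsto i

theorem differentiableAt_sum_inv_sub_smul [NontriviallyNormedField 𝕜] [NormedAddCommGroup E]
    [NormedSpace 𝕜 E] (α : ι → E) {w : 𝕜} (hw : w ∉ range z) :
    DifferentiableAt 𝕜 (fun w => ∑ j, (w - z j)⁻¹ • α j) w := by
  have hne (j : ι) : w - z j ≠ 0 := sub_ne_zero.2 fun h => hw ⟨j, h.symm⟩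
  fun_prop (disch := exact hne _)

end PartialFractions

section RemovableSingularities

theorem isLittleO_inv_sub_of_tendsto_sub_smul {𝕜 E : Type*} [NormedField 𝕜]
    [SeminormedAddCommGroup E] [NormedSpace 𝕜 E] {f : 𝕜 → E} {c : 𝕜}
    (hf : Tendsto (fun w => (w - c) • f w) (𝓝[≠] c) (𝓝 0)) :
    f =o[𝓝[≠] c] fun w => (w - c)⁻¹ := by
  refine ((isBigO_refl (fun w => (w - c)⁻¹) (𝓝[≠] c)).smul_isLittleO
    ((isLittleO_one_iff 𝕜).2 hf)).congr' ?_ (.of_forall fun w => mul_one _)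
  filter_upwards [self_mem_nhdsWithin] with w hw
  exact inv_smul_smul₀ (sub_ne_zero.2 hw) _

theorem tendsto_sub_smul_of_continuousAt {𝕜 E : Type*} [NormedField 𝕜]
    [SeminormedAddCommGroup E] [NormedSpace 𝕜 E] {f : 𝕜 → E} {c : 𝕜} (hf : ContinuousAt f c) :
    Tendsto (fun w => (w - c) • f w) (𝓝[≠] c) (𝓝 0) := by
  have hcont : ContinuousAt (fun w => (w - c) • f w) c := by fun_prop
  simpa only [sub_self, zero_smul] using hcont.tendsto.mono_left nhdsWithin_le_nhds

variable {E : Type*} [NormedAddCommGroup E] [NormedSpace ℂ E] {f : ℂ → E}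

theorem differentiableAt_limUnder_of_tendsto_sub_smul [CompleteSpace E] {c : ℂ}
    (hd : ∀ᶠ w in 𝓝[≠] c, DifferentiableAt ℂ f w)
    (hc : Tendsto (fun w => (w - c) • f w) (𝓝[≠] c) (𝓝 0)) :
    DifferentiableAt ℂ (fun w => limUnder (𝓝[≠] w) f) c := by
  have hs : {w | w ≠ c → DifferentiableAt ℂ f w} ∈ 𝓝 c := eventually_nhdsWithin_iff.1 hd
  have hlittle : (fun w => f w - f c) =o[𝓝[≠] c] fun w => (w - c)⁻¹ :=
    (isLittleO_inv_sub_of_tendsto_sub_smul hc).sub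
      (isLittleO_inv_sub_of_tendsto_sub_smul (tendsto_sub_smul_of_continuousAt continuousAt_const))
  have hupdate : DifferentiableAt ℂ (update f c (limUnder (𝓝[≠] c) f)) c :=
    (Complex.differentiableOn_update_limUnder_of_isLittleO hs
      (fun w hw => (hw.1 hw.2).differentiableWithinAt) hlittle).differentiableAt hs
  refine hupdate.congr_of_eventuallyEq ?_
  filter_upwards [hs] with w hw
  rcases eq_or_ne w c with rfl | hwc
  · rw [update_self]
  · rw [update_of_ne hwc]
    exact (hw hwc).continuousAt.continuousWithinAt.tendsto.limUnder_eq

theorem exists_differentiable_eqOn_compl_of_tendsto_sub_smul [CompleteSpace E] {S : Set ℂ}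
    (hS : Sᶜ ∈ codiscrete ℂ) (hd : ∀ w ∉ S, DifferentiableAt ℂ f w)
    (hsing : ∀ c ∈ S, Tendsto (fun w => (w - c) • f w) (𝓝[≠] c) (𝓝 0)) :
    ∃ F : ℂ → E, Differentiable ℂ F ∧ EqOn f F Sᶜ := by
  refine ⟨fun w => limUnder (𝓝[≠] w) f, fun c => ?_, fun w hw => ?_⟩
  · have hSc : Sᶜ ∈ 𝓝[≠] c := by
      simpa only [disjoint_principal_right, compl_compl] using mem_codiscrete.1 hS c
    refine differentiableAt_limUnder_of_tendsto_sub_smul (mem_of_superset hSc hd) ?_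
    by_cases hc : c ∈ S
    · exact hsing c hc
    · exact tendsto_sub_smul_of_continuousAt (hd c hc).continuousAt
  · exact (hd w hw).continuousAt.continuousWithinAt.tendsto.limUnder_eq.symm

theorem apply_eq_of_tendsto_cocompact_of_tendsto_sub_smul {S : Set ℂ} {a : E} (hS : S.Finite)
    (hd : ∀ w ∉ S, DifferentiableAt ℂ f w)
    (hsing : ∀ c ∈ S, Tendsto (fun w => (w - c) • f w) (𝓝[≠] c) (𝓝 0))
    (hinf : Tendsto f (cocompact ℂ) (𝓝 a)) {w : ℂ} (hw : w ∉ S) : f w = a := by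
  -- The removable singularity theorem needs a complete codomain, so pass to the completion of `E`.
  let e : E →L[ℂ] UniformSpace.Completion E := UniformSpace.Completion.toComplL
  have hsing_e (c : ℂ) (hc : c ∈ S) :
      Tendsto (fun w => (w - c) • e (f w)) (𝓝[≠] c) (𝓝 0) := by
    simpa only [comp_def, map_smul, map_zero] using (e.continuous.tendsto 0).comp (hsing c hc)
  obtain ⟨F, hF, hfF⟩ := exists_differentiable_eqOn_compl_of_tendsto_sub_smul (f := e ∘ f)
    (codiscrete_le_cofinite hS.compl_mem_cofinite)
    (fun w hw => e.differentiableAt.comp w (hd w hw)) hsing_e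
  have hFinf : Tendsto F (cocompact ℂ) (𝓝 (e a)) :=
    ((e.continuous.tendsto a).comp hinf).congr'
      (hfF.eventuallyEq_of_mem hS.isCompact.compl_mem_cocompact)
  exact UniformSpace.Completion.coe_injective E
    ((hfF hw).trans (hF.apply_eq_of_tendsto_cocompact w hFinf))

end RemovableSingularities

theorem eq_sum_partial_fractions_general {E ι : Type*} [NormedAddCommGroup E] [NormedSpace ℂ E]
    [Fintype ι] {z : ι → ℂ} (hz : Injective z) {α : ι → E} {g : ℂ → E} {a : E}
    (hdiff : ∀ w ∉ range z, DifferentiableAt ℂ g w)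
    (hinf : Tendsto g (cocompact ℂ) (𝓝 a))
    (hres : ∀ j, Tendsto (fun w => (w - z j) • g w) (𝓝[≠] z j) (𝓝 (α j)))
    {w : ℂ} (hw : w ∉ range z) : g w = a + ∑ j, (w - z j)⁻¹ • α j := by
  refine sub_eq_iff_eq_add.1 (apply_eq_of_tendsto_cocompact_of_tendsto_sub_smul
    (f := fun w => g w - ∑ j, (w - z j)⁻¹ • α j) (finite_range z) ?_ ?_ ?_ hw)
  · exact fun w hw => (hdiff w hw).sub (differentiableAt_sum_inv_sub_smul α hw)
  · rintro _ ⟨j, rfl⟩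
    simpa only [smul_sub, sub_self] using
      (hres j).sub (tendsto_sub_smul_sum_inv_sub_smul hz α j)
  · rw [← Metric.cobounded_eq_cocompact] at hinf ⊢
    simpa only [sub_zero] using hinf.sub (tendsto_sum_inv_sub_smul_cobounded z α)

/-- Uniqueness of partial fractions: if `g` is complex-differentiable away from the
distinct points `z j`, tends to `0` at infinity, and has at worst a simple pole with
residue `α j` at each `z j`, then `g(w) = ∑ j, α j / (w − z j)` away from the poles. -/
theorem eq_sum_partial_fractions (n : ℕ) (hn : 1 ≤ n) (z : Fin n → ℂ)
    (hz : Function.Injective z) (α : Fin n → ℂ) (g : ℂ → ℂ)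
    (hdiff : ∀ w ∉ Set.range z, DifferentiableAt ℂ g w)
    (hinf : Tendsto g (cocompact ℂ) (nhds 0))
    (hres : ∀ j : Fin n,
      Tendsto (fun w => (w - z j) * g w) (nhdsWithin (z j) {z j}ᶜ) (nhds (α j))) :
    ∀ w ∉ Set.range z, g w = ∑ j, α j / (w - z j) := by
  intro w hw
  simpa only [zero_add, smul_eq_mul, inv_mul_eq_div] using
    eq_sum_partial_fractions_general hz hdiff hinf hres hw
end

section
/- Let H be a finitely generated free ℤ-module, let Π ⊆ H be a submodule which is a direct summand of H, and let π ∈ Π. Let S be the set of submodules M ⊆ H such that M + Π = H and M ∩ Π = ℤ·π. Then: (a) for all M, M' ∈ S there is a well-defined ℤ-linear map δ(M,M') : H/Π → Π/ℤπ, sending the class x + Π of any x ∈ M to the class (x' − x) + ℤπ, where x' is any element of M' with x' − x ∈ Π; and (b) for each fixed M ∈ S, the map M' ↦ δ(M,M') is a bijection from S onto Hom(H/Π, Π/ℤπ). -/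
/-- `M` is an `E`-module for the data `(P, e)`: `M + P = H` and `M ∩ P = ℤ·e`. -/
def IsEModule {H : Type*} [AddCommGroup H] (P : Submodule ℤ H) (e : H)
    (M : Submodule ℤ H) : Prop :=
  M ⊔ P = ⊤ ∧ M ⊓ P = Submodule.span ℤ {e}

/-!
A submodule `M` with `M + P = H` and `M ∩ P = L` is the same thing as a linear map `r : H → P/L`
extending the quotient map `P → P/L`: from `M` one gets `H → H/M ≅ P/L` by the second isomorphism
theorem, and from `r` one recovers `M = ker r`. Two such maps differ by a map vanishing on `P`, so
they form an affine space directed by `Hom(H/P, P/L)`. If `r` and `r'` correspond to `M` and `M'`,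
then for `x ∈ M`, `x' ∈ M'` with `x' - x ∈ P` the class of `x' - x` is
`r' (x' - x) = -r' x = (r - r') x`, so `δ(M, M')` is the map induced by `r - r'`.
-/

section

variable {R H : Type*} [Ring R] [AddCommGroup H] [Module R H]

/-- `M` is a complement of `P` modulo `L`: when `L ≤ P`, this says that `L ≤ M` and that `M / L` is
a complement of `P / L` in `H / L`. The `E`-modules are the case `R = ℤ`, `L = ℤ·e`. -/
def IsComplModulo (P L M : Submodule R H) : Prop :=
  M ⊔ P = ⊤ ∧ M ⊓ P = L

/-- `r` is a retraction of `H` onto `P` modulo `L`: it extends the quotient map `P → P / L`. The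
quotient is encoded as `P ⧸ L.comap P.subtype`, which is `P / (L ∩ P)` when `L` is not contained
in `P`. -/
def IsRetractionModulo (P L : Submodule R H) (r : H →ₗ[R] P ⧸ L.comap P.subtype) : Prop :=
  r ∘ₗ P.subtype = (L.comap P.subtype).mkQ

/-- `f` is the displacement `δ(M, M')` from `M` to `M'`: it sends the class of `x ∈ M` to the class
of `x' - x` for every `x' ∈ M'` congruent to `x` modulo `P`. -/
def IsDisplacement (P L M M' : Submodule R H) (f : (H ⧸ P) →ₗ[R] P ⧸ L.comap P.subtype) : Prop :=
  ∀ x ∈ M, ∀ x' ∈ M', ∀ h : x' - x ∈ P,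
    f (Submodule.Quotient.mk x) = Submodule.Quotient.mk (⟨x' - x, h⟩ : P)

variable {P L M M' : Submodule R H}

namespace IsRetractionModulo

variable {r r' : H →ₗ[R] P ⧸ L.comap P.subtype}

theorem apply_coe (hr : IsRetractionModulo P L r) (p : P) : r p = Submodule.Quotient.mk p :=
  LinearMap.congr_fun hr p

theorem sub_comp_mkQ (hr : IsRetractionModulo P L r) (f : (H ⧸ P) →ₗ[R] P ⧸ L.comap P.subtype) :
    IsRetractionModulo P L (r - f ∘ₗ P.mkQ) := by
  ext p
  simp [hr.apply_coe, (Submodule.Quotient.mk_eq_zero P).2 p.2]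

theorem le_ker_sub (hr : IsRetractionModulo P L r) (hr' : IsRetractionModulo P L r') :
    P ≤ LinearMap.ker (r - r') := by
  intro p hp
  simp [hr.apply_coe ⟨p, hp⟩, hr'.apply_coe ⟨p, hp⟩]

theorem ker_sup_eq_top (hr : IsRetractionModulo P L r) : LinearMap.ker r ⊔ P = ⊤ := by
  refine eq_top_iff.2 fun x _ => ?_
  obtain ⟨p, hp⟩ := Submodule.Quotient.mk_surjective _ (r x)
  have hxp : x - p ∈ LinearMap.ker r := by
    rw [LinearMap.mem_ker, map_sub, hr.apply_coe, hp, sub_self]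
  simpa only [sub_add_cancel] using Submodule.add_mem_sup hxp p.2

theorem ker_inf_eq (hr : IsRetractionModulo P L r) (hL : L ≤ P) : LinearMap.ker r ⊓ P = L := by
  have mem_ker_iff (p : P) : (p : H) ∈ LinearMap.ker r ↔ (p : H) ∈ L := by
    rw [LinearMap.mem_ker, hr.apply_coe, Submodule.Quotient.mk_eq_zero, Submodule.mem_comap,
      Submodule.subtype_apply]
  ext x
  exact ⟨fun ⟨hx, hxP⟩ => (mem_ker_iff ⟨x, hxP⟩).1 hx,
    fun hx => ⟨(mem_ker_iff ⟨x, hL hx⟩).2 hx, hL hx⟩⟩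

theorem isComplModulo_ker (hr : IsRetractionModulo P L r) (hL : L ≤ P) :
    IsComplModulo P L (LinearMap.ker r) :=
  ⟨hr.ker_sup_eq_top, hr.ker_inf_eq hL⟩

theorem eq_of_ker_eq (hr : IsRetractionModulo P L r) (hr' : IsRetractionModulo P L r')
    (hker : LinearMap.ker r = LinearMap.ker r') : r = r' := by
  refine LinearMap.ext_on_codisjoint (codisjoint_iff.2 hr.ker_sup_eq_top) ?_ ?_
  · intro x hx
    exact (LinearMap.mem_ker.1 hx).trans (LinearMap.mem_ker.1 (hker.le hx)).symm
  · intro p hp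
    exact (hr.apply_coe ⟨p, hp⟩).trans (hr'.apply_coe ⟨p, hp⟩).symm

end IsRetractionModulo

namespace IsComplModulo

theorem le (hM : IsComplModulo P L M) : L ≤ P :=
  hM.2 ▸ inf_le_right

theorem exists_mem_sub_mem (hM : IsComplModulo P L M) (x : H) : ∃ y ∈ M, y - x ∈ P := by
  obtain ⟨y, hy, p, hp, rfl⟩ := Submodule.mem_sup.1 (hM.1.ge (Submodule.mem_top (x := x)))
  exact ⟨y, hy, by simpa using hp⟩

theorem ker_mkQ_comp_subtype (hM : IsComplModulo P L M) :
    LinearMap.ker (M.mkQ ∘ₗ P.subtype) = L.comap P.subtype := by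
  rw [LinearMap.ker_comp, Submodule.ker_mkQ, ← hM.2, Submodule.comap_inf,
    Submodule.comap_subtype_self, inf_top_eq]

theorem mkQ_comp_subtype_surjective (hM : IsComplModulo P L M) :
    Function.Surjective (M.mkQ ∘ₗ P.subtype) := by
  rw [← LinearMap.range_eq_top, LinearMap.range_comp, Submodule.range_subtype,
    Submodule.map_mkQ_eq_top]
  exact hM.1

/-- The second isomorphism theorem `P / L ≃ H / M` for a complement `M` of `P` modulo `L`. -/
noncomputable def quotientEquiv (hM : IsComplModulo P L M) :
    (P ⧸ L.comap P.subtype) ≃ₗ[R] H ⧸ M :=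
  (Submodule.quotEquivOfEq _ _ hM.ker_mkQ_comp_subtype.symm).trans
    ((M.mkQ ∘ₗ P.subtype).quotKerEquivOfSurjective hM.mkQ_comp_subtype_surjective)

/-- The retraction onto `P` modulo `L` with kernel `M`, namely `H → H / M ≃ P / L`. -/
noncomputable def retraction (hM : IsComplModulo P L M) : H →ₗ[R] P ⧸ L.comap P.subtype :=
  hM.quotientEquiv.symm.toLinearMap ∘ₗ M.mkQ

theorem isRetractionModulo_retraction (hM : IsComplModulo P L M) :
    IsRetractionModulo P L hM.retraction := by
  ext p
  exact hM.quotientEquiv.symm_apply_eq.2 rfl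

theorem ker_retraction (hM : IsComplModulo P L M) : LinearMap.ker hM.retraction = M := by
  rw [retraction, LinearEquiv.ker_comp, Submodule.ker_mkQ]

theorem retraction_apply_eq_zero (hM : IsComplModulo P L M) {x : H} (hx : x ∈ M) :
    hM.retraction x = 0 :=
  LinearMap.mem_ker.1 (hM.ker_retraction.ge hx)

theorem mk_sub_eq_retraction_sub (hM : IsComplModulo P L M) (hM' : IsComplModulo P L M')
    {x x' : H} (hx : x ∈ M) (hx' : x' ∈ M') (h : x' - x ∈ P) :
    Submodule.Quotient.mk (⟨x' - x, h⟩ : P) = hM.retraction x - hM'.retraction x := by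
  rw [← hM'.isRetractionModulo_retraction.apply_coe, map_sub, hM'.retraction_apply_eq_zero hx',
    hM.retraction_apply_eq_zero hx]

theorem isDisplacement_iff (hM : IsComplModulo P L M) (hM' : IsComplModulo P L M')
    {f : (H ⧸ P) →ₗ[R] P ⧸ L.comap P.subtype} :
    IsDisplacement P L M M' f ↔ f ∘ₗ P.mkQ = hM.retraction - hM'.retraction := by
  constructor
  · intro hf
    refine LinearMap.ext_on_codisjoint (codisjoint_iff.2 hM.1) ?_ ?_
    · intro x hx
      obtain ⟨x', hx', h⟩ := hM'.exists_mem_sub_mem x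
      exact (hf x hx x' hx' h).trans (hM.mk_sub_eq_retraction_sub hM' hx hx' h)
    · intro p hp
      have hdiff : (hM.retraction - hM'.retraction) p = 0 :=
        hM.isRetractionModulo_retraction.le_ker_sub hM'.isRetractionModulo_retraction hp
      rw [hdiff, LinearMap.comp_apply, Submodule.mkQ_apply, (Submodule.Quotient.mk_eq_zero P).2 hp,
        map_zero]
  · intro hf x hx x' hx' h
    rw [hM.mk_sub_eq_retraction_sub hM' hx hx' h]
    exact LinearMap.congr_fun hf x

theorem existsUnique_isDisplacement (hM : IsComplModulo P L M) (hM' : IsComplModulo P L M') :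
    ∃! f, IsDisplacement P L M M' f := by
  simp only [hM.isDisplacement_iff hM']
  refine ⟨P.liftQ _ (hM.isRetractionModulo_retraction.le_ker_sub
    hM'.isRetractionModulo_retraction), P.liftQ_mkQ _ _, fun f hf => ?_⟩
  exact Submodule.linearMap_qext P (hf.trans (P.liftQ_mkQ _ _).symm)

theorem isDisplacement_iff_eq_ker (hM : IsComplModulo P L M) (hM' : IsComplModulo P L M')
    {f : (H ⧸ P) →ₗ[R] P ⧸ L.comap P.subtype} :
    IsDisplacement P L M M' f ↔ M' = LinearMap.ker (hM.retraction - f ∘ₗ P.mkQ) := by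
  rw [hM.isDisplacement_iff hM', eq_sub_iff_add_eq', ← eq_sub_iff_add_eq]
  constructor
  · intro h
    rw [← h, hM'.ker_retraction]
  · intro h
    exact hM'.isRetractionModulo_retraction.eq_of_ker_eq
      (hM.isRetractionModulo_retraction.sub_comp_mkQ f) (hM'.ker_retraction.trans h)

theorem existsUnique_isComplModulo_isDisplacement (hM : IsComplModulo P L M)
    (f : (H ⧸ P) →ₗ[R] P ⧸ L.comap P.subtype) :
    ∃! M', IsComplModulo P L M' ∧ IsDisplacement P L M M' f := by
  have hker : IsComplModulo P L (LinearMap.ker (hM.retraction - f ∘ₗ P.mkQ)) :=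
    (hM.isRetractionModulo_retraction.sub_comp_mkQ f).isComplModulo_ker hM.le
  exact ⟨_, ⟨hker, (hM.isDisplacement_iff_eq_ker hker).2 rfl⟩,
    fun M' ⟨hM', hf⟩ => (hM.isDisplacement_iff_eq_ker hM').1 hf⟩

end IsComplModulo

theorem e_modules_torsor_general (P L : Submodule R H) :
    (∀ M, IsComplModulo P L M → ∀ M', IsComplModulo P L M' → ∃! f, IsDisplacement P L M M' f) ∧
    (∀ M, IsComplModulo P L M → ∀ f, ∃! M', IsComplModulo P L M' ∧ IsDisplacement P L M M' f) :=
  ⟨fun _ hM _ hM' => hM.existsUnique_isDisplacement hM',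
    fun _ hM f => hM.existsUnique_isComplModulo_isDisplacement f⟩

end

/-- The affine (torsor) structure on the set of `E`-modules: (a) for `E`-modules `M, M'`
there is a unique `ℤ`-linear map `δ(M,M') : H/P → P/ℤe` sending the class of `x ∈ M` to
the class of `x' − x`, where `x' ∈ M'` is any element with `x' − x ∈ P`; and (b) for each
fixed `E`-module `M`, the map `M' ↦ δ(M,M')` is a bijection from the set of `E`-modules
onto `Hom(H/P, P/ℤe)`. -/
theorem e_modules_torsor {H : Type*} [AddCommGroup H]
    [Module.Free ℤ H] [Module.Finite ℤ H]
    (P : Submodule ℤ H) (hP : ∃ Q : Submodule ℤ H, IsCompl P Q) (e : H) (he : e ∈ P) :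
    (∀ M : Submodule ℤ H, IsEModule P e M → ∀ M' : Submodule ℤ H, IsEModule P e M' →
      ∃! f : (H ⧸ P) →ₗ[ℤ] (P ⧸ (Submodule.span ℤ {e}).comap P.subtype),
        ∀ x ∈ M, ∀ x' ∈ M', ∀ h : x' - x ∈ P,
          f (Submodule.Quotient.mk x) = Submodule.Quotient.mk (⟨x' - x, h⟩ : P)) ∧
    (∀ M : Submodule ℤ H, IsEModule P e M →
      ∀ f : (H ⧸ P) →ₗ[ℤ] (P ⧸ (Submodule.span ℤ {e}).comap P.subtype),
        ∃! M' : Submodule ℤ H, IsEModule P e M' ∧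
          ∀ x ∈ M, ∀ x' ∈ M', ∀ h : x' - x ∈ P,
            f (Submodule.Quotient.mk x) = Submodule.Quotient.mk (⟨x' - x, h⟩ : P)) :=
  e_modules_torsor_general P (Submodule.span ℤ {e})
end

section
/- Define F : ℝ × ℝ → ℝ × ℝ by F(x,y) = (x − y, y) if y < x and F(x,y) = (x, y − x) otherwise. Let x₀ > 0 and y₀ > 0 with x₀/y₀ irrational, and let (xₙ, yₙ) := Fⁿ(x₀, y₀). Then for every n one has xₙ > 0, yₙ > 0 and xₙ/yₙ irrational, and the sequence (xₙ, yₙ) converges to (0, 0) as n → ∞. -/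
open Filter

/-- The subtractive Euclidean-algorithm map on `ℝ × ℝ`: subtract the smaller coordinate
from the larger one. -/
noncomputable def euclidStep : ℝ × ℝ → ℝ × ℝ :=
  fun q => if q.2 < q.1 then (q.1 - q.2, q.2) else (q.1, q.2 - q.1)

/-!
Write `s` and `m` for the sum and the minimum of the two coordinates along an orbit. A step
subtracts `m` from `s`, so as long as the orbit stays positive `s` decreases to a limit `L ≥ 0`
and `m → 0`. A step changes `m` only if `s < 3 m`. Since `m` is positive and tends to `0`, it
changes infinitely often, hence `s < 3 m` infinitely often and `L ≤ 0`.
-/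

open Topology

section Sequences

lemma tendsto_sub_succ_zero {G : Type*} [AddGroup G] [TopologicalSpace G]
    [ContinuousSub G] {u : ℕ → G} {a : G} (hu : Tendsto u atTop (𝓝 a)) :
    Tendsto (fun n => u n - u (n + 1)) atTop (𝓝 0) := by
  simpa only [sub_self, Function.comp_apply] using hu.sub (hu.comp (tendsto_add_atTop_nat 1))

lemma frequently_succ_ne_of_tendsto {X : Type*} [TopologicalSpace X] [T1Space X] {u : ℕ → X}
    {a : X} (hu : Tendsto u atTop (𝓝 a)) (hne : ∀ n, u n ≠ a) :
    ∃ᶠ n in atTop, u (n + 1) ≠ u n := by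
  intro hstat
  obtain ⟨N, hN⟩ := eventually_atTop.1 hstat
  have hconst : ∀ n ≥ N, u n = u N := fun n hn => by
    induction n, hn using Nat.le_induction with
    | base => rfl
    | succ n hn ih => exact (not_not.1 (hN n hn)).trans ih
  have hlim : Tendsto (fun _ : ℕ => u N) atTop (𝓝 a) :=
    hu.congr' (eventually_atTop.2 ⟨N, hconst⟩)
  exact hne N (tendsto_const_nhds_iff.1 hlim)

end Sequences

section Step

variable {q : ℝ × ℝ}

lemma euclidStep_of_lt (h : q.2 < q.1) : euclidStep q = (q.1 - q.2, q.2) :=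
  if_pos h

lemma euclidStep_of_le (h : q.1 ≤ q.2) : euclidStep q = (q.1, q.2 - q.1) :=
  if_neg h.not_gt

lemma euclidStep_fst_add_snd (q : ℝ × ℝ) :
    (euclidStep q).1 + (euclidStep q).2 = q.1 + q.2 - min q.1 q.2 := by
  rcases lt_or_ge q.2 q.1 with h | h
  · rw [euclidStep_of_lt h, min_eq_right h.le]
    ring
  · rw [euclidStep_of_le h, min_eq_left h]
    ring

lemma min_euclidStep_of_three_mul_min_le (h : 3 * min q.1 q.2 ≤ q.1 + q.2) :
    min (euclidStep q).1 (euclidStep q).2 = min q.1 q.2 := by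
  rcases lt_or_ge q.2 q.1 with hlt | hle
  · rw [min_eq_right hlt.le] at h ⊢
    rw [euclidStep_of_lt hlt]
    exact min_eq_right (by linarith)
  · rw [min_eq_left hle] at h ⊢
    rw [euclidStep_of_le hle]
    exact min_eq_left (by linarith)

end Step

section PositiveOrbit

variable {q : ℝ × ℝ}

lemma exists_tendsto_iterate_euclidStep_fst_add_snd
    (hpos : ∀ n, 0 < (euclidStep^[n] q).1 ∧ 0 < (euclidStep^[n] q).2) :
    ∃ L, Tendsto (fun n => (euclidStep^[n] q).1 + (euclidStep^[n] q).2) atTop (𝓝 L) := by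
  refine ⟨_, tendsto_atTop_ciInf (antitone_nat_of_succ_le fun n => ?_) ⟨0, ?_⟩⟩
  · rw [Function.iterate_succ_apply', euclidStep_fst_add_snd]
    exact sub_le_self _ (lt_min (hpos n).1 (hpos n).2).le
  · rintro _ ⟨n, rfl⟩
    exact (add_pos (hpos n).1 (hpos n).2).le

lemma tendsto_min_iterate_euclidStep_zero {L : ℝ}
    (hL : Tendsto (fun n => (euclidStep^[n] q).1 + (euclidStep^[n] q).2) atTop (𝓝 L)) :
    Tendsto (fun n => min (euclidStep^[n] q).1 (euclidStep^[n] q).2) atTop (𝓝 0) :=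
  (tendsto_sub_succ_zero hL).congr fun n => by
    rw [Function.iterate_succ_apply', euclidStep_fst_add_snd, sub_sub_cancel]

lemma tendsto_iterate_euclidStep_fst_add_snd_zero
    (hpos : ∀ n, 0 < (euclidStep^[n] q).1 ∧ 0 < (euclidStep^[n] q).2) :
    Tendsto (fun n => (euclidStep^[n] q).1 + (euclidStep^[n] q).2) atTop (𝓝 0) := by
  obtain ⟨L, hL⟩ := exists_tendsto_iterate_euclidStep_fst_add_snd hpos
  have hmin := tendsto_min_iterate_euclidStep_zero hL
  have hchange := frequently_succ_ne_of_tendsto hmin fun n => (lt_min (hpos n).1 (hpos n).2).ne'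
  have hsum_le : ∃ᶠ n in atTop, (euclidStep^[n] q).1 + (euclidStep^[n] q).2 ≤
      3 * min (euclidStep^[n] q).1 (euclidStep^[n] q).2 := by
    refine hchange.mono fun n hn => le_of_not_ge fun hle => hn ?_
    rw [Function.iterate_succ_apply', min_euclidStep_of_three_mul_min_le hle]
  have hL_nonpos : L ≤ 3 * 0 :=
    le_of_tendsto_of_tendsto_of_frequently hL (hmin.const_mul 3) hsum_le
  have hL_nonneg : 0 ≤ L := ge_of_tendsto' hL fun n => (add_pos (hpos n).1 (hpos n).2).le
  obtain rfl : L = 0 := by linarith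
  exact hL

theorem tendsto_iterate_euclidStep_zero
    (hpos : ∀ n, 0 < (euclidStep^[n] q).1 ∧ 0 < (euclidStep^[n] q).2) :
    Tendsto (fun n => euclidStep^[n] q) atTop (𝓝 (0, 0)) := by
  have hsum := tendsto_iterate_euclidStep_fst_add_snd_zero hpos
  have hfst : Tendsto (fun n => (euclidStep^[n] q).1) atTop (𝓝 0) :=
    squeeze_zero (fun n => (hpos n).1.le)
      (fun n => le_add_of_nonneg_right (hpos n).2.le) hsum
  have hsnd : Tendsto (fun n => (euclidStep^[n] q).2) atTop (𝓝 0) :=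
    squeeze_zero (fun n => (hpos n).2.le)
      (fun n => le_add_of_nonneg_left (hpos n).1.le) hsum
  exact hfst.prodMk_nhds hsnd

end PositiveOrbit

section Incommensurable

/-- The pairs of positive reals with irrational quotient: the region of the plane on which the
subtractive Euclidean algorithm never terminates. -/
def positiveIncommensurablePairs : Set (ℝ × ℝ) :=
  {q | 0 < q.1 ∧ 0 < q.2 ∧ Irrational (q.1 / q.2)}

lemma irrational_sub_div_iff {x y : ℝ} (hy : y ≠ 0) :
    Irrational ((x - y) / y) ↔ Irrational (x / y) := by
  rw [sub_div, div_self hy]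
  exact_mod_cast irrational_sub_natCast_iff (n := 1)

lemma irrational_div_comm {x y : ℝ} : Irrational (x / y) ↔ Irrational (y / x) := by
  rw [← inv_div, irrational_inv_iff]

lemma ne_of_irrational_div {x y : ℝ} (h : Irrational (x / y)) : x ≠ y := by
  rintro rfl
  obtain rfl | hx := eq_or_ne x 0
  · exact h.ne_zero (div_zero 0)
  · exact h.ne_one (div_self hx)

lemma mapsTo_euclidStep_positiveIncommensurablePairs :
    Set.MapsTo euclidStep positiveIncommensurablePairs positiveIncommensurablePairs := by
  rintro ⟨x, y⟩ ⟨hx : 0 < x, hy : 0 < y, hirr : Irrational (x / y)⟩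
  rcases (ne_of_irrational_div hirr).lt_or_gt with hxy | hyx
  · rw [euclidStep_of_le hxy.le]
    exact ⟨hx, sub_pos.2 hxy, irrational_div_comm.1 <|
      (irrational_sub_div_iff hx.ne').2 <| irrational_div_comm.1 hirr⟩
  · rw [euclidStep_of_lt hyx]
    exact ⟨sub_pos.2 hyx, hy, (irrational_sub_div_iff hy.ne').2 hirr⟩

end Incommensurable

/-- Subtractive Euclidean dynamics: starting from positive reals `x₀, y₀` with irrational
ratio, all iterates have positive coordinates with irrational ratio, and the iterates
converge to `(0, 0)`. -/
theorem euclid_dynamics (x₀ y₀ : ℝ) (hx : 0 < x₀) (hy : 0 < y₀)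
    (hirr : Irrational (x₀ / y₀)) :
    (∀ n : ℕ, 0 < (euclidStep^[n] (x₀, y₀)).1 ∧ 0 < (euclidStep^[n] (x₀, y₀)).2 ∧
      Irrational ((euclidStep^[n] (x₀, y₀)).1 / (euclidStep^[n] (x₀, y₀)).2)) ∧
    Tendsto (fun n : ℕ => euclidStep^[n] (x₀, y₀)) atTop (nhds (0, 0)) := by
  have horbit : ∀ n, euclidStep^[n] (x₀, y₀) ∈ positiveIncommensurablePairs := fun n =>
    mapsTo_euclidStep_positiveIncommensurablePairs.iterate n ⟨hx, hy, hirr⟩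
  exact ⟨horbit, tendsto_iterate_euclidStep_zero fun n => ⟨(horbit n).1, (horbit n).2.1⟩⟩
end
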